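/- arXiv:2310.14266 — 5 statements merged into one kernel-verified Lean document; each statement's English description precedes it below -/
import Mathlib

section
/- The semi-tensor product of matrices is associative: for matrices A ∈ F^{m×n}, B ∈ F^{p×q}, C ∈ F^{r×s} over a commutative ring F, one has (A ⋉ B) ⋉ C = A ⋉ (B ⋉ C), where both sides are matrices whose row and column index sets have equal cardinalities (by arithmetic identities among the least common multiples involved) and are identified via the standard equivalences between Fin of equal sizes. -/
open Matrix Kronecker

/-- The semi-tensor product (STP) of matrices: for `A ∈ F^{m×n}` and `B ∈ F^{p×q}` with
`t = lcm n p`, `A ⋉ B := (A ⊗ I_{t/n}) · (B ⊗ I_{t/p})`, where the product index sets of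
sizes `a` and `b` are identified with `Fin (a*b)` via the standard lexicographic
equivalence `finProdFinEquiv`. -/
noncomputable def stp {F : Type*} [CommRing F] {m n p q : ℕ}
    (A : Matrix (Fin m) (Fin n) F) (B : Matrix (Fin p) (Fin q) F) :
    Matrix (Fin (m * (Nat.lcm n p / n))) (Fin (q * (Nat.lcm n p / p))) F :=
  (Matrix.reindex finProdFinEquiv finProdFinEquiv
      (A ⊗ₖ (1 : Matrix (Fin (Nat.lcm n p / n)) (Fin (Nat.lcm n p / n)) F))) *
  (Matrix.reindex
      (finProdFinEquiv.trans (finCongr (by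
        rw [Nat.mul_div_cancel' (Nat.dvd_lcm_right n p),
          Nat.mul_div_cancel' (Nat.dvd_lcm_left n p)])))
      finProdFinEquiv
      (B ⊗ₖ (1 : Matrix (Fin (Nat.lcm n p / p)) (Fin (Nat.lcm n p / p)) F)))

/-- `A ⊗ I_k` with row and column index sets transported to given sizes. -/
noncomputable def stpK {F : Type*} [CommRing F] {m n : ℕ}
    (A : Matrix (Fin m) (Fin n) F) (k : ℕ) {M N : ℕ} (hM : m * k = M) (hN : n * k = N) :
    Matrix (Fin M) (Fin N) F :=
  Matrix.reindex (finProdFinEquiv.trans (finCongr hM)) (finProdFinEquiv.trans (finCongr hN))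
    (A ⊗ₖ (1 : Matrix (Fin k) (Fin k) F))

theorem stpK_mul {F : Type*} [CommRing F] {m n q k M N Q : ℕ}
    (A : Matrix (Fin m) (Fin n) F) (B : Matrix (Fin n) (Fin q) F)
    (hM : m * k = M) (hN : n * k = N) (hQ : q * k = Q) :
    stpK (A * B) k hM hQ = stpK A k hM hN * stpK B k hN hQ := by
  unfold stpK
  simp only [Matrix.reindex_apply]
  rw [Matrix.submatrix_mul_equiv, ← Matrix.mul_kronecker_mul, Matrix.one_mul]

theorem stpK_stpK {F : Type*} [CommRing F] {m n k l M N M' N' : ℕ}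
    (A : Matrix (Fin m) (Fin n) F)
    (hM : m * k = M) (hN : n * k = N) (hM' : M * l = M') (hN' : N * l = N') :
    stpK (stpK A k hM hN) l hM' hN' =
      stpK A (k * l) (by rw [← hM', ← hM, mul_assoc]) (by rw [← hN', ← hN, mul_assoc]) := by
  subst hM hN hM' hN'
  ext i j
  simp only [stpK, Matrix.reindex_apply, Matrix.submatrix_apply, Matrix.kroneckerMap_apply,
    Matrix.one_apply, finProdFinEquiv, Equiv.symm_trans_apply, Equiv.coe_fn_symm_mk, Fin.ext_iff,
    Fin.modNat, Fin.divNat, finCongr_symm, finCongr_apply, Fin.val_cast, Nat.div_div_eq_div_mul]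
  have key : ((i : ℕ) / l % k = j / l % k ∧ (i : ℕ) % l = j % l) ↔
      (i : ℕ) % (k * l) = j % (k * l) := by
    rw [mul_comm k l, Nat.mod_mul, Nat.mod_mul]
    constructor
    · rintro ⟨h1, h2⟩
      rw [h1, h2]
    · intro h
      rcases Nat.eq_zero_or_pos l with h0 | h0
      · subst h0; simpa using h
      have a1 := Nat.mod_lt (i : ℕ) h0
      have a2 := Nat.mod_lt (j : ℕ) h0
      have e1 := congrArg (· % l) h
      have e2 := congrArg (· / l) h
      simp [Nat.add_mul_div_left _ _ h0, Nat.div_eq_of_lt a1, Nat.div_eq_of_lt a2] at e1 e2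
      exact ⟨e2, e1⟩
  have e : l * k = k * l := mul_comm l k
  simp only [e]
  by_cases h : (i : ℕ) % (k * l) = j % (k * l)
  · obtain ⟨h1, h2⟩ := key.mpr h
    simp [h, h1, h2]
  · by_cases h1 : (i : ℕ) / l % k = j / l % k
    · have h2 : ¬ (i : ℕ) % l = j % l := fun h2 => h (key.mp ⟨h1, h2⟩)
      simp [h, h2]
    · simp [h, h1]

theorem stpK_tri {F : Type*} [CommRing F] {m n p q r s x y z x' y' z' M T U N M' T' U' N' : ℕ}
    (A : Matrix (Fin m) (Fin n) F) (B : Matrix (Fin p) (Fin q) F) (C : Matrix (Fin r) (Fin s) F)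
    (hx : x = x') (hy : y = y') (hz : z = z')
    (a1 : m * x = M) (a2 : n * x = T) (b1 : p * y = T) (b2 : q * y = U)
    (c1 : r * z = U) (c2 : s * z = N)
    (a1' : m * x' = M') (a2' : n * x' = T') (b1' : p * y' = T') (b2' : q * y' = U')
    (c1' : r * z' = U') (c2' : s * z' = N') (h₁ : M = M') (h₂ : N = N') :
    Matrix.reindex (finCongr h₁) (finCongr h₂)
      (stpK A x a1 a2 * stpK B y b1 b2 * stpK C z c1 c2) =
    stpK A x' a1' a2' * (stpK B y' b1' b2' * stpK C z' c1' c2') := by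
  subst hx hy hz a1 a2 b2 c2 a1' a2' b2' c2'
  rw [← Matrix.mul_assoc]
  rfl

theorem stp_eq_stpK {F : Type*} [CommRing F] {m n p q : ℕ}
    (A : Matrix (Fin m) (Fin n) F) (B : Matrix (Fin p) (Fin q) F) :
    stp A B = (stpK A (Nat.lcm n p / n) rfl rfl :
        Matrix (Fin (m * (Nat.lcm n p / n))) (Fin (n * (Nat.lcm n p / n))) F) *
      (stpK B (Nat.lcm n p / p) (by rw [Nat.mul_div_cancel' (Nat.dvd_lcm_right n p),
          Nat.mul_div_cancel' (Nat.dvd_lcm_left n p)]) rfl :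
        Matrix (Fin (n * (Nat.lcm n p / n))) (Fin (q * (Nat.lcm n p / p))) F) := rfl

theorem stp_arith {n p q r : ℕ} (hn : 0 < n) (hp : 0 < p) (hq : 0 < q) (hr : 0 < r) :
    (Nat.lcm n p / n) * (Nat.lcm (q * (Nat.lcm n p / p)) r / (q * (Nat.lcm n p / p))) =
      Nat.lcm n (p * (Nat.lcm q r / q)) / n ∧
    (Nat.lcm n p / p) * (Nat.lcm (q * (Nat.lcm n p / p)) r / (q * (Nat.lcm n p / p))) =
      (Nat.lcm q r / q) * (Nat.lcm n (p * (Nat.lcm q r / q)) / (p * (Nat.lcm q r / q))) ∧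
    Nat.lcm (q * (Nat.lcm n p / p)) r / r =
      (Nat.lcm q r / r) * (Nat.lcm n (p * (Nat.lcm q r / q)) / (p * (Nat.lcm q r / q))) := by
  have ha := Nat.mul_div_cancel' (Nat.dvd_lcm_left n p)
  have hb := Nat.mul_div_cancel' (Nat.dvd_lcm_right n p)
  have hb2 := Nat.mul_div_cancel' (Nat.dvd_lcm_left q r)
  have hc2 := Nat.mul_div_cancel' (Nat.dvd_lcm_right q r)
  set a := Nat.lcm n p / n
  set b := Nat.lcm n p / p
  set b2 := Nat.lcm q r / q
  set c2 := Nat.lcm q r / r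
  have ha' := Nat.mul_div_cancel' (Nat.dvd_lcm_left (q * b) r)
  have hc' := Nat.mul_div_cancel' (Nat.dvd_lcm_right (q * b) r)
  have ha2 := Nat.mul_div_cancel' (Nat.dvd_lcm_left n (p * b2))
  have hd2 := Nat.mul_div_cancel' (Nat.dvd_lcm_right n (p * b2))
  set a' := Nat.lcm (q * b) r / (q * b)
  set c' := Nat.lcm (q * b) r / r
  set a2 := Nat.lcm n (p * b2) / n
  set d2 := Nat.lcm n (p * b2) / (p * b2)
  have k1 : ∀ y, b ∣ y ↔ n ∣ p * y := fun y => by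
    rw [← Nat.mul_dvd_mul_iff_left hp, hb, Nat.lcm_dvd_iff]; simp
  have k2 : ∀ y, b2 ∣ y ↔ r ∣ q * y := fun y => by
    rw [← Nat.mul_dvd_mul_iff_left hq, hb2, Nat.lcm_dvd_iff]; simp
  have k3 : ∀ y, b * a' ∣ y ↔ (b ∣ y ∧ b2 ∣ y) := fun y => by
    rw [← Nat.mul_dvd_mul_iff_left hq, ← mul_assoc, ha', Nat.lcm_dvd_iff,
      Nat.mul_dvd_mul_iff_left hq, k2]
  have k4 : ∀ y, b2 * d2 ∣ y ↔ (b ∣ y ∧ b2 ∣ y) := fun y => by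
    rw [← Nat.mul_dvd_mul_iff_left hp, ← mul_assoc, hd2, Nat.lcm_dvd_iff,
      Nat.mul_dvd_mul_iff_left hp, k1]
  have e : b * a' = b2 * d2 :=
    Nat.dvd_antisymm ((k3 _).2 ((k4 _).1 dvd_rfl)) ((k4 _).2 ((k3 _).1 dvd_rfl))
  refine ⟨?_, e, ?_⟩
  · apply Nat.eq_of_mul_eq_mul_left hn
    rw [ha2, ← hd2, ← mul_assoc, ha, ← hb, mul_assoc, e, mul_assoc]
  · apply Nat.eq_of_mul_eq_mul_left hr
    rw [hc', ← ha', ← mul_assoc, hc2, ← hb2, mul_assoc, e, mul_assoc]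

/-- The semi-tensor product is associative: `(A ⋉ B) ⋉ C = A ⋉ (B ⋉ C)`,
where the row and column index sets of the two sides have equal cardinalities (by
arithmetic identities among the least common multiples involved) and are identified via
the standard equivalences (`finCongr`) between `Fin` of equal sizes. -/
theorem stp_assoc {F : Type*} [CommRing F] {m n p q r s : ℕ}
    (A : Matrix (Fin m) (Fin n) F) (B : Matrix (Fin p) (Fin q) F)
    (C : Matrix (Fin r) (Fin s) F) :
    ∃ (h₁ : (m * (Nat.lcm n p / n)) *
          (Nat.lcm (q * (Nat.lcm n p / p)) r / (q * (Nat.lcm n p / p))) =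
        m * (Nat.lcm n (p * (Nat.lcm q r / q)) / n))
      (h₂ : s * (Nat.lcm (q * (Nat.lcm n p / p)) r / r) =
        (s * (Nat.lcm q r / r)) *
          (Nat.lcm n (p * (Nat.lcm q r / q)) / (p * (Nat.lcm q r / q)))),
      Matrix.reindex (finCongr h₁) (finCongr h₂) (stp (stp A B) C) = stp A (stp B C) := by
  by_cases h0 : n = 0 ∨ p = 0 ∨ q = 0 ∨ r = 0
  · have z : m * (Nat.lcm n (p * (Nat.lcm q r / q)) / n) = 0 := by
      rcases h0 with h | h | h | h <;> subst h <;> simp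
    refine ⟨?_, ?_, ?_⟩
    · rcases h0 with h | h | h | h <;> subst h <;> simp
    · rcases h0 with h | h | h | h <;> subst h <;> simp
    · ext i
      exact absurd i.2 (by omega)
  · have hn : 0 < n := by omega
    have hp : 0 < p := by omega
    have hq : 0 < q := by omega
    have hr : 0 < r := by omega
    obtain ⟨e1, e2, e3⟩ := stp_arith hn hp hq hr
    refine ⟨by rw [mul_assoc, e1], by rw [mul_assoc, e3], ?_⟩
    simp only [stp_eq_stpK]
    rw [stpK_mul _ _ _ rfl, stpK_mul _ _ _ rfl]
    simp only [stpK_stpK]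
    exact stpK_tri A B C e1 e2 e3 _ _ _ _ _ _ _ _ _ _ _ _ _ _
end

section
/- Uniqueness of hypervector decomposition: let F be a field, r ≥ 1, n : Fin r → ℕ, and x_i, z_i : Fin n_i → F for each i. Suppose that for every tuple j ∈ Π i, Fin n_i one has ∏_i x_i(j_i) = ∏_i z_i(j_i), and that this common product function is not identically zero. Then there exist scalars k_i ∈ F, i = 1,…,r, with ∏_{i=1}^r k_i = 1 and z_i = k_i • x_i for every i. -/
/-- Uniqueness of hypervector decomposition. Let `F` be a field, `r ≥ 1`,
`n : Fin r → ℕ`, and `x i, z i : Fin (n i) → F`. If the hypervector products coincide,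
`∏ i, x i (j i) = ∏ i, z i (j i)` for every tuple `j`, and this common product function
is not identically zero, then there are scalars `k i ∈ F` with `∏ i, k i = 1` and
`z i = k i • x i` for every `i`. -/
theorem hypervector_decomposition_unique {F : Type*} [Field F] {r : ℕ} (hr : 1 ≤ r)
    {n : Fin r → ℕ} (x z : ∀ i : Fin r, Fin (n i) → F)
    (heq : ∀ j : ∀ i, Fin (n i), ∏ i : Fin r, x i (j i) = ∏ i : Fin r, z i (j i))
    (hne : ¬ ∀ j : ∀ i, Fin (n i), ∏ i : Fin r, x i (j i) = 0) :
    ∃ k : Fin r → F, (∏ i : Fin r, k i) = 1 ∧ ∀ i : Fin r, z i = k i • x i := by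
  push Not at hne
  obtain ⟨J, hJ⟩ := hne
  have hJz : ∏ i : Fin r, z i (J i) ≠ 0 := heq J ▸ hJ
  have hx : ∀ i, x i (J i) ≠ 0 := fun i => Finset.prod_ne_zero_iff.mp hJ i (Finset.mem_univ i)
  have hz : ∀ i, z i (J i) ≠ 0 := fun i => Finset.prod_ne_zero_iff.mp hJz i (Finset.mem_univ i)
  refine ⟨fun i => z i (J i) / x i (J i), ?_, ?_⟩
  · rw [Finset.prod_div_distrib, ← heq J, div_self hJ]
  · intro i
    funext t
    have key : ∀ (y : ∀ i : Fin r, Fin (n i) → F) (s : Fin (n i)),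
        ∏ l : Fin r, y l (Function.update J i s l)
          = y i s * ∏ l ∈ Finset.univ.erase i, y l (J l) := by
      intro y s
      rw [← Finset.mul_prod_erase Finset.univ _ (Finset.mem_univ i), Function.update_self]
      congr 1
      refine Finset.prod_congr rfl fun l hl => ?_
      rw [Function.update_of_ne (Finset.ne_of_mem_erase hl)]
    have h1 := heq (Function.update J i t)
    have h2 := heq (Function.update J i (J i))
    rw [key, key] at h1 h2
    have hQ : ∏ l ∈ Finset.univ.erase i, z l (J l) ≠ 0 :=
      Finset.prod_ne_zero_iff.mpr fun l _ => hz l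
    have h3 : z i t * x i (J i) = z i (J i) * x i t := by
      apply mul_right_cancel₀ hQ
      linear_combination x i t * h2 - x i (J i) * h1
    rw [Pi.smul_apply, smul_eq_mul, div_mul_eq_mul_div, eq_div_iff (hx i), h3]
end

section
/- The components of a nonzero hypervector span a uniquely determined subspace: let F be a field, r ≥ 1, and x_i, z_i : Fin n → F for i = 1,…,r (all components in F^n). Suppose that for every tuple j ∈ (Fin r → Fin n) one has ∏_i x_i(j_i) = ∏_i z_i(j_i), and that this common product function is not identically zero. Then the linear span of {x_1,…,x_r} equals the linear span of {z_1,…,z_r} as subspaces of F^n. -/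
theorem hypervector_span_le_aux {F : Type*} [Field F] {r n : ℕ}
    (x z : Fin r → (Fin n → F))
    (heq : ∀ j : Fin r → Fin n, ∏ i : Fin r, x i (j i) = ∏ i : Fin r, z i (j i))
    (j : Fin r → Fin n) (hj : ∏ i : Fin r, x i (j i) ≠ 0) :
    Submodule.span F (Set.range x) ≤ Submodule.span F (Set.range z) := by
  rw [Submodule.span_le]
  rintro _ ⟨k, rfl⟩
  have key : ∀ (y : Fin r → (Fin n → F)) (a : Fin n),
      ∏ i : Fin r, y i (Function.update j k a i)
        = y k a * ∏ i ∈ Finset.univ.erase k, y i (j i) := by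
    intro y a
    rw [← Finset.mul_prod_erase Finset.univ _ (Finset.mem_univ k), Function.update_self]
    congr 1
    refine Finset.prod_congr rfl fun i hi => ?_
    rw [Function.update_of_ne (Finset.ne_of_mem_erase hi)]
  have hP : ∏ i ∈ Finset.univ.erase k, x i (j i) ≠ 0 := by
    intro h
    apply hj
    rw [← Finset.mul_prod_erase Finset.univ _ (Finset.mem_univ k), h, mul_zero]
  have hx : x k = ((∏ i ∈ Finset.univ.erase k, z i (j i)) /
      (∏ i ∈ Finset.univ.erase k, x i (j i))) • z k := by
    funext a
    have h := heq (Function.update j k a)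
    rw [key, key] at h
    rw [Pi.smul_apply, smul_eq_mul, div_mul_eq_mul_div, eq_div_iff hP, h, mul_comm]
  rw [hx]
  exact Submodule.smul_mem _ _ (Submodule.subset_span ⟨k, rfl⟩)

/-- The components of a nonzero hypervector span a uniquely determined
subspace. Let `F` be a field, `r ≥ 1`, and `x i, z i : Fin n → F` for `i : Fin r`. If
`∏ i, x i (j i) = ∏ i, z i (j i)` for every tuple `j : Fin r → Fin n`, and this common
product function is not identically zero, then the linear span of `{x 1, …, x r}` equals
the linear span of `{z 1, …, z r}` as subspaces of `F^n`. -/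
theorem hypervector_span_unique {F : Type*} [Field F] {r n : ℕ} (hr : 1 ≤ r)
    (x z : Fin r → (Fin n → F))
    (heq : ∀ j : Fin r → Fin n, ∏ i : Fin r, x i (j i) = ∏ i : Fin r, z i (j i))
    (hne : ¬ ∀ j : Fin r → Fin n, ∏ i : Fin r, x i (j i) = 0) :
    Submodule.span F (Set.range x) = Submodule.span F (Set.range z) := by
  push Not at hne
  obtain ⟨j, hj⟩ := hne
  exact le_antisymm (hypervector_span_le_aux x z heq j hj)
    (hypervector_span_le_aux z x (fun j => (heq j).symm) j (heq j ▸ hj))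
end

section
/- Index formula in the diagonal case: let F be a field, n ≥ 2, r ≥ 1, and z : Fin n → F a nonzero vector with e_0 ∈ {0,…,n−1} the minimal index such that z(e_0) ≠ 0. Identify each k with 0 ≤ k < n^r with its base-n digit tuple (d_1(k),…,d_r(k)). Let e be the minimal k with ∏_{i=1}^r z(d_i(k)) ≠ 0 (the index of the diagonal hypervector z^{⊗r}). Then e·(n−1) = e_0·(n^r − 1). -/
/-- The number with `r` base-`n` digits all equal to `a`. -/
def repDigit (n a : ℕ) : ℕ → ℕ
  | 0 => 0
  | r + 1 => n * repDigit n a r + a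

theorem repDigit_lt {n a : ℕ} (ha : a < n) (r : ℕ) : repDigit n a r < n ^ r := by
  induction r with
  | zero => simp [repDigit]
  | succ r ih =>
    have h : n * (repDigit n a r + 1) ≤ n * n ^ r := Nat.mul_le_mul_left n ih
    rw [repDigit, pow_succ']
    rw [Nat.mul_add] at h
    omega

theorem repDigit_digit {n a : ℕ} (ha : a < n) (r : ℕ) :
    ∀ j, j < r → repDigit n a r / n ^ j % n = a := by
  induction r with
  | zero => intro j hj; omega
  | succ r ih =>
    intro j hj
    cases j with
    | zero => simp [repDigit, Nat.mul_add_mod, Nat.mod_eq_of_lt ha]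
    | succ j =>
      rw [pow_succ', ← Nat.div_div_eq_div_mul, repDigit, Nat.mul_add_div (by omega),
        Nat.div_eq_of_lt ha, Nat.add_zero]
      exact ih j (by omega)

theorem repDigit_le {n a : ℕ} (r : ℕ) :
    ∀ k, (∀ j, j < r → a ≤ k / n ^ j % n) → repDigit n a r ≤ k := by
  induction r with
  | zero => intro k _; simp [repDigit]
  | succ r ih =>
    intro k hk
    have h1 : repDigit n a r ≤ k / n := by
      apply ih
      intro j hj
      have := hk (j + 1) (by omega)
      rwa [pow_succ', ← Nat.div_div_eq_div_mul] at this
    have h0 : a ≤ k % n := by simpa using hk 0 (by omega)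
    have h2 := Nat.mul_le_mul_left n h1
    have h3 := Nat.div_add_mod k n
    rw [repDigit]
    omega

theorem repDigit_mul {n a : ℕ} (hn : 1 ≤ n) (r : ℕ) :
    repDigit n a r * (n - 1) = a * (n ^ r - 1) := by
  have hp : 1 ≤ n ^ r := Nat.one_le_pow _ _ hn
  zify [hn, hp]
  clear hp
  induction r with
  | zero => simp [repDigit]
  | succ r ih =>
    rw [repDigit]
    push_cast
    linear_combination (n : ℤ) * ih

/-- Index formula in the diagonal case. Let `F` be a field, `n ≥ 2`,
`r ≥ 1`, and `z : Fin n → F` a nonzero vector whose minimal nonzero index is `e₀ < n`.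
Identifying each `k` with `0 ≤ k < n^r` with its base-`n` digit tuple
`d_i(k) = k / n^(r-1-i) % n` (most significant first), let `e` be the minimal `k < n^r`
with `∏ i, z (d_i k) ≠ 0` (the index of the diagonal hypervector `z^{⊗r}`). Then
`e·(n−1) = e₀·(n^r − 1)` (the paper's 1-based form `(e−1)(n−1) = (e₀−1)(n^r−1)`). -/
theorem diagonal_hypervector_index {F : Type*} [Field F] {n r : ℕ}
    (hn : 2 ≤ n) (hr : 1 ≤ r) (z : Fin n → F) (e₀ : ℕ)
    (he₀ : e₀ < n)
    (hz : z ⟨e₀, he₀⟩ ≠ 0)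
    (hmin : ∀ t : Fin n, z t ≠ 0 → e₀ ≤ (t : ℕ))
    (e : ℕ)
    (he : IsLeast {k : ℕ | k < n ^ r ∧
        (∏ i : Fin r, z ⟨k / n ^ (r - 1 - (i : ℕ)) % n, Nat.mod_lt _ (by omega)⟩) ≠ 0} e) :
    e * (n - 1) = e₀ * (n ^ r - 1) := by
  have hE : e = repDigit n e₀ r := by
    apply le_antisymm
    · apply he.2
      refine ⟨repDigit_lt he₀ r, Finset.prod_ne_zero_iff.2 fun i _ => ?_⟩
      have := repDigit_digit he₀ r (r - 1 - (i : ℕ)) (by omega)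
      simpa only [this] using hz
    · apply repDigit_le
      intro j hj
      have h := Finset.prod_ne_zero_iff.1 he.1.2 ⟨r - 1 - j, by omega⟩ (Finset.mem_univ _)
      have h' := hmin _ h
      have hj' : r - 1 - (r - 1 - j) = j := by omega
      simpa only [hj'] using h'
  rw [hE]
  exact repDigit_mul (by omega) r
end

section
/- Reduction of the U-eigenequation to a general matrix eigenequation: let F be a commutative ring, n, N, s ≥ 1, B_j ∈ F^{n×N} for j = 1,…,s, and x : Fin N → F. Define B̃ as the matrix with row index set (Fin s → Fin n) and column index set (Fin s → Fin N) given by B̃(t, l) = ∏_{j=1}^s B_j(t_j, l_j), and define x^{⊗s} : (Fin s → Fin N) → F by x^{⊗s}(l) = ∏_{j=1}^s x(l_j). Then the function t ↦ ∏_{j=1}^s (B_j · x)(t_j) equals B̃ · x^{⊗s}; consequently, for any matrix A with row index set (Fin s → Fin n) and column index Fin N and any λ ∈ F, the U-eigenequation A·x = λ • (⋉_{j=1}^s B_j x) holds if and only if A·x = λ • (B̃ · x^{⊗s}). -/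
open Matrix

/-- Reduction of the U-eigenequation to a general matrix eigenequation.
Let `F` be a commutative ring, `n, N, s ≥ 1`, `B j ∈ F^{n×N}`, and `x : Fin N → F`.
With `B̃ (t, l) = ∏ j, B j (t j) (l j)` (rows indexed by `Fin s → Fin n`, columns by
`Fin s → Fin N`) and `x^{⊗s} (l) = ∏ j, x (l j)`, the function
`t ↦ ∏ j, (B j · x) (t j)` equals `B̃ · x^{⊗s}`; consequently, for any matrix `A` (rows
`Fin s → Fin n`, columns `Fin N`) and any `λ ∈ F`, the U-eigenequation
`A·x = λ • (⋉_j B_j x)` holds iff `A·x = λ • (B̃ · x^{⊗s})`. -/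
theorem u_eigen_reduction {F : Type*} [CommRing F] {n N s : ℕ}
    (hn : 1 ≤ n) (hN : 1 ≤ N) (hs : 1 ≤ s)
    (B : Fin s → Matrix (Fin n) (Fin N) F) (x : Fin N → F) :
    ((fun t : Fin s → Fin n => ∏ j : Fin s, (B j).mulVec x (t j)) =
      (Matrix.of (fun (t : Fin s → Fin n) (l : Fin s → Fin N) =>
          ∏ j : Fin s, B j (t j) (l j))).mulVec
        (fun l : Fin s → Fin N => ∏ j : Fin s, x (l j))) ∧
    ∀ (A : Matrix (Fin s → Fin n) (Fin N) F) (lam : F),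
      (A.mulVec x = lam • fun t : Fin s → Fin n => ∏ j : Fin s, (B j).mulVec x (t j)) ↔
      A.mulVec x = lam •
        (Matrix.of (fun (t : Fin s → Fin n) (l : Fin s → Fin N) =>
            ∏ j : Fin s, B j (t j) (l j))).mulVec
          (fun l : Fin s → Fin N => ∏ j : Fin s, x (l j)) := by
  have key : (fun t : Fin s → Fin n => ∏ j : Fin s, (B j).mulVec x (t j)) =
      (Matrix.of (fun (t : Fin s → Fin n) (l : Fin s → Fin N) =>
          ∏ j : Fin s, B j (t j) (l j))).mulVec
        (fun l : Fin s → Fin N => ∏ j : Fin s, x (l j)) := by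
    funext t
    simp only [Matrix.mulVec, dotProduct, Matrix.of_apply, ← Finset.prod_mul_distrib]
    exact Fintype.prod_sum (fun (j : Fin s) (k : Fin N) => B j (t j) k * x k)
  refine ⟨key, fun A lam => ?_⟩
  rw [key]
end
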